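/- arXiv:1708.06604 — 5 statements merged into one kernel-verified Lean document; each statement's English description precedes it below -/
import Mathlib

section
/- For every x > 0, β(x) = - d/dx [ log B(x/2, 1/2) ], i.e. β(x) equals the negative of the derivative at x of the function x ↦ log( Γ(x/2) Γ(1/2) / Γ((x+1)/2) ). -/
open Real MeasureTheory Set

/-- Nielsen's beta function: `β(x) = ∫₀^∞ e^{-x t} / (1 + e^{-t}) dt`. -/
noncomputable def nielsenBeta (x : ℝ) : ℝ :=
  ∫ t in Set.Ioi (0:ℝ), Real.exp (-x * t) / (1 + Real.exp (-t))

/-!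
Both sides are nonnegative solutions on `(0, ∞)` of the functional equation `f x + f (x + 1) = 1 / x`,
and such a solution is unique (`eq_of_add_shift`): nonnegativity forces `0 ≤ f x ≤ 1 / x`, while the
difference of two solutions changes sign, but not size, under `x ↦ x + 1`, so its absolute value
at `x` is at most `1 / (x + n)` for every `n`.

For `nielsenBeta` the equation is `∫₀^∞ e^{-xt} dt = 1 / x`. Writing `ψ = (log Γ)'`, the other
side is `(ψ ((x + 1) / 2) - ψ (x / 2)) / 2`; it is nonnegative because `log Γ` is convex, and the
equation is `ψ (y + 1) = ψ y + 1 / y` at `y = x / 2`.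
-/

/-- Uniqueness of the nonnegative solution on `(0, ∞)` of `f x + f (x + 1) = 1 / x`. -/
lemma eq_of_add_shift {f g : ℝ → ℝ}
    (hf : ∀ x, 0 < x → 0 ≤ f x) (hg : ∀ x, 0 < x → 0 ≤ g x)
    (hf' : ∀ x, 0 < x → f x + f (x + 1) = 1 / x)
    (hg' : ∀ x, 0 < x → g x + g (x + 1) = 1 / x) {x : ℝ} (hx : 0 < x) : f x = g x := by
  have habs : ∀ n : ℕ, |f x - g x| = |f (x + n) - g (x + n)| := by
    intro n
    induction n with
    | zero => simp
    | succ n ih =>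
      have hn : 0 < x + n := by positivity
      rw [ih, ← abs_neg]
      push_cast
      rw [← add_assoc]
      congr 1
      linarith [hf' _ hn, hg' _ hn]
  have hle : ∀ n : ℕ, |f x - g x| ≤ 1 / (x + n) := by
    intro n
    have hn : 0 < x + n := by positivity
    have hn1 : 0 < x + n + 1 := by positivity
    rw [habs n, abs_le]
    constructor <;> linarith [hf' _ hn, hg' _ hn, hf _ hn, hg _ hn, hf _ hn1, hg _ hn1]
  have hlim : Filter.Tendsto (fun n : ℕ => 1 / (x + n)) Filter.atTop (nhds 0) := by
    simp only [one_div]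
    exact (Filter.tendsto_atTop_add_const_left _ x tendsto_natCast_atTop_atTop).inv_tendsto_atTop
  have h0 := ge_of_tendsto' hlim hle
  exact sub_eq_zero.mp (abs_nonpos_iff.mp h0)

lemma nielsenBeta_nonneg (x : ℝ) : 0 ≤ nielsenBeta x :=
  integral_nonneg fun t => by positivity

lemma integrableOn_nielsenBeta {x : ℝ} (hx : 0 < x) :
    IntegrableOn (fun t : ℝ => exp (-x * t) / (1 + exp (-t))) (Ioi 0) := by
  refine Integrable.mono' (integrableOn_exp_mul_Ioi (neg_neg_of_pos hx) 0) ?_ ?_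
  · refine Continuous.aestronglyMeasurable ?_
    exact Continuous.div (by fun_prop) (by fun_prop) fun t => by positivity
  · refine Filter.Eventually.of_forall fun t => ?_
    rw [norm_of_nonneg (by positivity)]
    exact div_le_self (exp_pos _).le (by linarith [exp_pos (-t)])

lemma nielsenBeta_add_shift {x : ℝ} (hx : 0 < x) :
    nielsenBeta x + nielsenBeta (x + 1) = 1 / x := by
  unfold nielsenBeta
  rw [← integral_add (integrableOn_nielsenBeta hx) (integrableOn_nielsenBeta (by positivity))]
  have h : ∀ t : ℝ, exp (-x * t) / (1 + exp (-t)) + exp (-(x + 1) * t) / (1 + exp (-t))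
      = exp (-x * t) := by
    intro t
    have h1 : exp (-(x + 1) * t) = exp (-x * t) * exp (-t) := by
      rw [← exp_add]; ring_nf
    have h2 : 1 + exp (-t) ≠ 0 := by positivity
    rw [h1]
    field_simp
  simp only [h]
  rw [integral_exp_mul_Ioi (neg_neg_of_pos hx) 0]
  simp

lemma differentiableAt_log_Gamma {y : ℝ} (hy : 0 < y) :
    DifferentiableAt ℝ (log ∘ Gamma) y :=
  ((differentiableOn_Gamma_Ioi y hy).differentiableAt (Ioi_mem_nhds hy)).log
    (Gamma_pos_of_pos hy).ne'

/-- The functional equation of the real digamma function `(log Γ)'`. -/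
lemma deriv_log_Gamma_add_one {y : ℝ} (hy : 0 < y) :
    deriv (log ∘ Gamma) (y + 1) = deriv (log ∘ Gamma) y + 1 / y := by
  have h1 : (fun z => (log ∘ Gamma) (z + 1)) =ᶠ[nhds y] fun z => (log ∘ Gamma) z + log z := by
    filter_upwards [Ioi_mem_nhds hy] with z hz
    have hz : 0 < z := hz
    simp only [Function.comp_apply]
    rw [Gamma_add_one hz.ne', log_mul hz.ne' (Gamma_pos_of_pos hz).ne', add_comm]
  rw [← deriv_comp_add_const, h1.deriv_eq,
    deriv_fun_add (differentiableAt_log_Gamma hy) (differentiableAt_log hy.ne'), deriv_log, one_div]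

/-- The digamma form of `-(log B(x/2, 1/2))'`. -/
lemma hasDerivAt_log_beta {x : ℝ} (hx : 0 < x) :
    HasDerivAt (fun y : ℝ => log (Gamma (y / 2) * Gamma (1 / 2) / Gamma ((y + 1) / 2)))
      (-((deriv (log ∘ Gamma) ((x + 1) / 2) - deriv (log ∘ Gamma) (x / 2)) / 2)) x := by
  have ha := (differentiableAt_log_Gamma (half_pos hx)).hasDerivAt.comp x
    ((hasDerivAt_id x).div_const 2)
  have hb := (differentiableAt_log_Gamma (y := (x + 1) / 2) (by positivity)).hasDerivAt.comp x
    (((hasDerivAt_id x).add_const 1).div_const 2)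
  have h := (ha.add_const (log (Gamma (1 / 2)))).sub hb
  refine (h.congr_of_eventuallyEq ?_).congr_deriv (by ring)
  filter_upwards [Ioi_mem_nhds hx] with y hy
  have hy : 0 < y := hy
  have h1 := (Gamma_pos_of_pos (half_pos hy)).ne'
  have h2 := (Gamma_pos_of_pos (show (0:ℝ) < 1 / 2 by norm_num)).ne'
  have h3 := (Gamma_pos_of_pos (show 0 < (y + 1) / 2 by positivity)).ne'
  rw [log_div (mul_ne_zero h1 h2) h3, log_mul h1 h2]
  simp

theorem nielsenBeta_eq_neg_deriv_log_betaIntegral (x : ℝ) (hx : 0 < x) :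
    nielsenBeta x =
      - deriv (fun y : ℝ =>
          Real.log (Real.Gamma (y / 2) * Real.Gamma (1 / 2) / Real.Gamma ((y + 1) / 2))) x := by
  rw [(hasDerivAt_log_beta hx).deriv, neg_neg]
  refine eq_of_add_shift (f := nielsenBeta)
    (g := fun x => (deriv (log ∘ Gamma) ((x + 1) / 2) - deriv (log ∘ Gamma) (x / 2)) / 2)
    (fun x _ => nielsenBeta_nonneg x) ?_ (fun x hx => nielsenBeta_add_shift hx) ?_ hx
  · intro x hx
    have hmono := convexOn_log_Gamma.monotoneOn_deriv
      (fun y hy => differentiableAt_log_Gamma hy)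
    have := hmono (a := x / 2) (b := (x + 1) / 2) (half_pos hx)
      (show 0 < (x + 1) / 2 by positivity) (by linarith)
    linarith
  · intro x hx
    have h := deriv_log_Gamma_add_one (half_pos hx)
    have h2 : (x + 1 + 1) / 2 = x / 2 + 1 := by ring
    simp only [h2, h]
    field_simp
    ring
end

section
/- Let m ∈ ℕ₀ be even. Then the m-th derivative β^(m) of Nielsen's β-function is positive and strictly decreasing on (0, ∞); in particular (m = 0) β itself is positive and strictly decreasing on (0, ∞). -/
/-!
Nielsen's `β` is the Laplace transform of the positive weight `1 / (1 + e^{-t})` on `(0, ∞)`, hence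
completely monotone. Writing `J m x = ∫₀^∞ t^m e^{-x t} / (1 + e^{-t}) dt`, the integral converges
and is positive for `x > 0`, and differentiation under the integral sign
(`hasDerivAt_nielsenMoment`; near `x₀` the derivative of the integrand is dominated by
`t^(m+1) e^{-(x₀/2) t}`) shows that the derivative of `J m` is `-J (m+1)`. So `β^(m) = (-1)^m J m` on `(0, ∞)`. For even `m`
this is `J m`, which is positive with negative derivative `-J (m+1)`.
-/

open Real MeasureTheory Set

/-- The moment integral `∫₀^∞ t^m e^{-x t} / (1 + e^{-t}) dt`, which is `(-1)^m β^(m)(x)` for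
`x > 0`. -/
noncomputable def nielsenMoment (m : ℕ) (x : ℝ) : ℝ :=
  ∫ t in Set.Ioi (0:ℝ), t ^ m * (Real.exp (-x * t) / (1 + Real.exp (-t)))

lemma continuous_nielsenMoment_integrand (m : ℕ) (x : ℝ) :
    Continuous fun t : ℝ => t ^ m * (Real.exp (-x * t) / (1 + Real.exp (-t))) := by
  have h : ∀ t : ℝ, 1 + Real.exp (-t) ≠ 0 := fun t => by positivity
  fun_prop (disch := exact h _)

lemma nielsenMoment_integrand_le {m : ℕ} {x t : ℝ} (ht : 0 < t) :
    t ^ m * (Real.exp (-x * t) / (1 + Real.exp (-t))) ≤ t ^ m * Real.exp (-x * t) := by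
  gcongr
  exact div_le_self (Real.exp_pos _).le (by linarith [Real.exp_pos (-t)])

lemma integrableOn_pow_mul_exp_neg_mul (m : ℕ) {x : ℝ} (hx : 0 < x) :
    IntegrableOn (fun t : ℝ => t ^ m * Real.exp (-x * t)) (Ioi 0) := by
  have h := integrableOn_rpow_mul_exp_neg_mul_rpow (p := 1) (s := m) (b := x)
    (by linarith [(Nat.cast_nonneg m : (0:ℝ) ≤ m)]) one_pos hx
  simpa only [Real.rpow_natCast, Real.rpow_one] using h

lemma integrableOn_nielsenMoment (m : ℕ) {x : ℝ} (hx : 0 < x) :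
    IntegrableOn (fun t : ℝ => t ^ m * (Real.exp (-x * t) / (1 + Real.exp (-t)))) (Ioi 0) := by
  refine Integrable.mono' (integrableOn_pow_mul_exp_neg_mul m hx)
    (continuous_nielsenMoment_integrand m x).aestronglyMeasurable ?_
  filter_upwards [ae_restrict_mem measurableSet_Ioi] with t ht
  have ht' : 0 < t := ht
  rw [Real.norm_of_nonneg (by positivity)]
  exact nielsenMoment_integrand_le ht'

lemma nielsenMoment_pos (m : ℕ) {x : ℝ} (hx : 0 < x) : 0 < nielsenMoment m x := by
  unfold nielsenMoment
  rw [setIntegral_pos_iff_support_of_nonneg_ae _ (integrableOn_nielsenMoment m hx)]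
  · have hsub : Ioi (0:ℝ) ⊆ Function.support
        (fun t : ℝ => t ^ m * (Real.exp (-x * t) / (1 + Real.exp (-t)))) := by
      intro t ht
      have ht' : 0 < t := ht
      exact ne_of_gt (by positivity)
    rw [inter_eq_right.mpr hsub]
    simp
  · filter_upwards [ae_restrict_mem measurableSet_Ioi] with t ht
    have ht' : 0 < t := ht
    simp only [Pi.zero_apply]
    positivity

lemma hasDerivAt_nielsenMoment (m : ℕ) {x : ℝ} (hx : 0 < x) :
    HasDerivAt (nielsenMoment m) (-nielsenMoment (m + 1) x) x := by
  have key := (hasDerivAt_integral_of_dominated_loc_of_deriv_le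
    (μ := volume.restrict (Ioi (0:ℝ)))
    (F := fun (y t : ℝ) => t ^ m * (Real.exp (-y * t) / (1 + Real.exp (-t))))
    (F' := fun (y t : ℝ) => -(t ^ (m + 1) * (Real.exp (-y * t) / (1 + Real.exp (-t)))))
    (bound := fun t : ℝ => t ^ (m + 1) * Real.exp (-(x / 2) * t))
    (Ioi_mem_nhds (half_lt_self hx))
    (Filter.Eventually.of_forall fun y =>
      (continuous_nielsenMoment_integrand m y).aestronglyMeasurable)
    (integrableOn_nielsenMoment m hx)
    (continuous_nielsenMoment_integrand (m + 1) x).neg.aestronglyMeasurable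
    ?_ (integrableOn_pow_mul_exp_neg_mul (m + 1) (half_pos hx)) ?_).2
  · rw [integral_neg] at key
    exact key
  · filter_upwards [ae_restrict_mem measurableSet_Ioi] with t ht y hy
    have ht' : 0 < t := ht
    have hy' : x / 2 < y := hy
    rw [norm_neg, Real.norm_of_nonneg (by positivity)]
    refine (nielsenMoment_integrand_le ht').trans ?_
    gcongr
  · refine Filter.Eventually.of_forall fun t y _ => ?_
    have h1 : HasDerivAt (fun y : ℝ => -y * t) (-1 * t) y := (hasDerivAt_id y).neg.mul_const t
    refine ((h1.exp.div_const (1 + Real.exp (-t))).const_mul (t ^ m)).congr_deriv ?_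
    ring

lemma iteratedDeriv_nielsenBeta (m : ℕ) {x : ℝ} (hx : 0 < x) :
    iteratedDeriv m nielsenBeta x = (-1) ^ m * nielsenMoment m x := by
  induction m generalizing x with
  | zero => simp [nielsenBeta, nielsenMoment]
  | succ k ih =>
    have hev : iteratedDeriv k nielsenBeta =ᶠ[nhds x] fun y => (-1) ^ k * nielsenMoment k y := by
      filter_upwards [Ioi_mem_nhds hx] with y hy using ih hy
    rw [iteratedDeriv_succ, hev.deriv_eq, ((hasDerivAt_nielsenMoment k hx).const_mul _).deriv]
    ring

theorem iteratedDeriv_nielsenBeta_pos_strictAnti_of_even (m : ℕ) (hm : Even m) :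
    (∀ x : ℝ, 0 < x → 0 < iteratedDeriv m nielsenBeta x) ∧
      StrictAntiOn (iteratedDeriv m nielsenBeta) (Set.Ioi 0) := by
  have heq : ∀ x : ℝ, 0 < x → iteratedDeriv m nielsenBeta x = nielsenMoment m x := fun x hx => by
    rw [iteratedDeriv_nielsenBeta m hx, hm.neg_one_pow, one_mul]
  refine ⟨fun x hx => heq x hx ▸ nielsenMoment_pos m hx, ?_⟩
  have hanti : StrictAntiOn (nielsenMoment m) (Ioi 0) := by
    refine strictAntiOn_of_deriv_neg (convex_Ioi 0)
      (fun x hx => (hasDerivAt_nielsenMoment m hx).continuousAt.continuousWithinAt) fun x hx => ?_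
    rw [interior_Ioi] at hx
    rw [(hasDerivAt_nielsenMoment m hx).deriv]
    exact neg_neg_of_pos (nielsenMoment_pos (m + 1) hx)
  exact hanti.congr fun x hx => (heq x hx).symm
end

section
/- Let m, n ∈ ℕ₀, let a > 1 and b satisfy 1/a + 1/b = 1, and suppose p ∈ ℕ₀ satisfies p = m/a + n/b. Then for all x, y > 0, |β^(p)(x/a + y/b)| ≤ |β^(m)(x)|^{1/a} · |β^(n)(y)|^{1/b}. -/
/-!
Nielsen's β-function is the moment generating function of `t ↦ -t` under the measure
`dμ(t) = dt / (1 + e^{-t})` on `(0, ∞)`. The exponential moments of `μ` are finite for every `x > 0`,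
so differentiation under the integral sign (`ProbabilityTheory.iteratedDeriv_mgf`) yields
`|β^(k)(x)| = ∫ t^k e^{-x t} dμ(t)`. Since `p = m/a + n/b`,
`t^p e^{-(x/a + y/b) t} = (t^m e^{-x t})^{1/a} (t^n e^{-y t})^{1/b}`,
and the claim is Hölder's inequality for the conjugate exponents `a` and `b`.
-/

open Real MeasureTheory Set

/-- The measure `dt / (1 + e^{-t})` on `(0, ∞)`. -/
noncomputable def nielsenMeasure : Measure ℝ :=
  (volume.restrict (Ioi (0:ℝ))).withDensity
    (fun t => ENNReal.ofReal (1 / (1 + Real.exp (-t))))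

lemma ae_pos_nielsenMeasure : ∀ᵐ t ∂nielsenMeasure, 0 < t :=
  (withDensity_absolutelyContinuous _ _).ae_le (ae_restrict_mem measurableSet_Ioi)

lemma nielsenBeta_eq_mgf :
    nielsenBeta = ProbabilityTheory.mgf (fun t : ℝ => -t) nielsenMeasure := by
  funext x
  rw [nielsenBeta, ProbabilityTheory.mgf, nielsenMeasure,
    integral_withDensity_eq_integral_toReal_smul (by fun_prop)
      (Filter.Eventually.of_forall fun t => ENNReal.ofReal_lt_top)]
  refine integral_congr_ae (Filter.Eventually.of_forall fun t => ?_)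
  have h : 0 ≤ 1 / (1 + Real.exp (-t)) := by positivity
  simp only [ENNReal.toReal_ofReal h, smul_eq_mul]
  rw [show -x * t = x * -t by ring]
  ring

lemma integrable_exp_nielsenMeasure {x : ℝ} (hx : 0 < x) :
    Integrable (fun t : ℝ => Real.exp (x * -t)) nielsenMeasure := by
  -- The density is at most `1`, so `nielsenMeasure` is dominated by Lebesgue measure on `(0, ∞)`.
  have hle : nielsenMeasure ≤ volume.restrict (Ioi (0:ℝ)) := by
    conv_rhs => rw [← withDensity_one (μ := volume.restrict (Ioi (0:ℝ)))]
    refine withDensity_mono (Filter.Eventually.of_forall fun t => ?_)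
    refine ENNReal.ofReal_le_one.2 ?_
    rw [div_le_one (by positivity)]
    linarith [Real.exp_pos (-t)]
  refine Integrable.mono_measure ?_ hle
  have h := exp_neg_integrableOn_Ioi 0 hx
  refine h.congr (Filter.Eventually.of_forall fun t => ?_)
  simp

lemma mem_interior_integrableExpSet_nielsenMeasure {x : ℝ} (hx : 0 < x) :
    x ∈ interior (ProbabilityTheory.integrableExpSet (fun t : ℝ => -t) nielsenMeasure) :=
  mem_interior.2 ⟨Ioi 0, fun _ hz => integrable_exp_nielsenMeasure hz, isOpen_Ioi, hx⟩

lemma integrable_pow_mul_exp_nielsenMeasure (k : ℕ) {x : ℝ} (hx : 0 < x) :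
    Integrable (fun t : ℝ => |t| ^ k * Real.exp (x * -t)) nielsenMeasure := by
  simpa using ProbabilityTheory.integrable_pow_abs_mul_exp_of_mem_interior_integrableExpSet
    (mem_interior_integrableExpSet_nielsenMeasure hx) k

lemma abs_iteratedDeriv_nielsenBeta (k : ℕ) {x : ℝ} (hx : 0 < x) :
    |iteratedDeriv k nielsenBeta x| =
      ∫ t, |t| ^ k * Real.exp (x * -t) ∂nielsenMeasure := by
  rw [nielsenBeta_eq_mgf, ProbabilityTheory.iteratedDeriv_mgf
    (mem_interior_integrableExpSet_nielsenMeasure hx)]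
  have h : ∫ t, (-t) ^ k * Real.exp (x * -t) ∂nielsenMeasure =
      (-1) ^ k * ∫ t, |t| ^ k * Real.exp (x * -t) ∂nielsenMeasure := by
    rw [← integral_const_mul]
    refine integral_congr_ae ?_
    filter_upwards [ae_pos_nielsenMeasure] with t ht
    rw [abs_of_pos ht, neg_pow]
    ring
  rw [h, abs_mul, abs_pow, abs_neg, abs_one, one_pow, one_mul]
  exact abs_of_nonneg (integral_nonneg fun t => by positivity)

lemma memLp_rpow_nielsenMeasure (k : ℕ) {x a : ℝ} (hx : 0 < x) (ha : 0 < a) :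
    MemLp (fun t : ℝ => (|t| ^ k * Real.exp (x * -t)) ^ (1 / a)) (ENNReal.ofReal a)
      nielsenMeasure := by
  have hm : Measurable (fun t : ℝ => (|t| ^ k * Real.exp (x * -t)) ^ (1 / a)) := by fun_prop
  rw [← integrable_norm_rpow_iff hm.aestronglyMeasurable (by simpa using ha)
    ENNReal.ofReal_ne_top, ENNReal.toReal_ofReal ha.le]
  refine (integrable_pow_mul_exp_nielsenMeasure k hx).congr
    (Filter.Eventually.of_forall fun t => ?_)
  have h0 : 0 ≤ |t| ^ k * Real.exp (x * -t) := by positivity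
  simp only
  rw [Real.norm_of_nonneg (by positivity), ← Real.rpow_mul h0, one_div_mul_cancel ha.ne',
    Real.rpow_one]

theorem iteratedDeriv_nielsenBeta_holder (m n p : ℕ) (a b : ℝ) (ha : 1 < a)
    (hab : 1 / a + 1 / b = 1) (hp : (p : ℝ) = m / a + n / b)
    (x y : ℝ) (hx : 0 < x) (hy : 0 < y) :
    |iteratedDeriv p nielsenBeta (x / a + y / b)| ≤
      |iteratedDeriv m nielsenBeta x| ^ (1 / a) *
        |iteratedDeriv n nielsenBeta y| ^ (1 / b) := by
  have hconj : a.HolderConjugate b := Real.holderConjugate_iff.2 ⟨ha, by simpa using hab⟩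
  have ha0 : 0 < a := hconj.pos
  have hb0 : 0 < b := hconj.symm.pos
  have hxy : 0 < x / a + y / b := by positivity
  rw [abs_iteratedDeriv_nielsenBeta p hxy, abs_iteratedDeriv_nielsenBeta m hx,
    abs_iteratedDeriv_nielsenBeta n hy]
  have hroot : ∀ (k : ℕ) (z c : ℝ), 0 < c → ∀ t : ℝ,
      ((|t| ^ k * Real.exp (z * -t)) ^ (1 / c)) ^ c = |t| ^ k * Real.exp (z * -t) := by
    intro k z c hc t
    rw [← Real.rpow_mul (by positivity), one_div_mul_cancel hc.ne', Real.rpow_one]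
  have H := integral_mul_le_Lp_mul_Lq_of_nonneg hconj
    (Filter.Eventually.of_forall fun t => by simp only [Pi.zero_apply]; positivity)
    (Filter.Eventually.of_forall fun t => by simp only [Pi.zero_apply]; positivity)
    (memLp_rpow_nielsenMeasure m hx ha0) (memLp_rpow_nielsenMeasure n hy hb0)
  simp only [hroot m x a ha0, hroot n y b hb0] at H
  refine le_of_eq_of_le (integral_congr_ae ?_) H
  filter_upwards [ae_pos_nielsenMeasure] with t ht
  rw [abs_of_pos ht, Real.mul_rpow (by positivity) (by positivity),
    Real.mul_rpow (by positivity) (by positivity), ← Real.rpow_natCast t p,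
    ← Real.rpow_natCast t m, ← Real.rpow_natCast t n, ← Real.rpow_mul ht.le,
    ← Real.rpow_mul ht.le, ← Real.exp_mul, ← Real.exp_mul, mul_mul_mul_comm,
    ← Real.rpow_add ht, ← Real.exp_add, hp]
  congr 2 <;> ring
end

section
/- Nielsen's β-function is logarithmically convex on (0, ∞): for all x, y > 0 and all u, v > 0 with u + v = 1, β(u x + v y) ≤ β(x)^u · β(y)^v. -/
/-!
Log-convexity is Hölder's inequality with conjugate exponents `1 / u` and `1 / v`. For each `t`,
the integrand `K x t = e^{-x t} / (1 + e^{-t})` is log-affine in `x`, so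
`K (u x + v y) t = (K x t) ^ u * (K y t) ^ v`, and Hölder bounds the integral of this product by
`(∫ K x) ^ u * (∫ K y) ^ v`. Its hypotheses hold because `K x` is positive and, for `0 < x`,
integrable on `(0, ∞)`, being dominated by `e^{-x t}`.
-/

open Real MeasureTheory Set

/-- The integrand of Nielsen's beta function. -/
noncomputable def nielsenKernel (x t : ℝ) : ℝ :=
  Real.exp (-x * t) / (1 + Real.exp (-t))

lemma nielsenKernel_pos (x t : ℝ) : 0 < nielsenKernel x t := by
  unfold nielsenKernel
  positivity

lemma continuous_nielsenKernel (x : ℝ) : Continuous (nielsenKernel x) := by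
  unfold nielsenKernel
  exact Continuous.div (by fun_prop) (by fun_prop) fun t => by positivity

lemma integrable_nielsenKernel {x : ℝ} (hx : 0 < x) :
    Integrable (nielsenKernel x) (volume.restrict (Ioi 0)) := by
  refine Integrable.mono' (exp_neg_integrableOn_Ioi 0 hx)
    (continuous_nielsenKernel x).aestronglyMeasurable (ae_of_all _ fun t => ?_)
  rw [Real.norm_of_nonneg (nielsenKernel_pos x t).le]
  exact div_le_self (Real.exp_pos _).le (by linarith [Real.exp_pos (-t)])

lemma nielsenKernel_combination {u v : ℝ} (huv : u + v = 1) (x y t : ℝ) :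
    nielsenKernel (u * x + v * y) t = nielsenKernel x t ^ u * nielsenKernel y t ^ v := by
  have hd : 0 < 1 + Real.exp (-t) := by positivity
  unfold nielsenKernel
  rw [Real.div_rpow (Real.exp_pos _).le hd.le, Real.div_rpow (Real.exp_pos _).le hd.le,
    div_mul_div_comm, ← Real.rpow_add hd, huv, Real.rpow_one, ← Real.exp_mul, ← Real.exp_mul,
    ← Real.exp_add]
  congr 2
  ring

lemma nielsenKernel_rpow_rpow {c : ℝ} (hc : 0 < c) (x t : ℝ) :
    (nielsenKernel x t ^ c) ^ (1 / c) = nielsenKernel x t := by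
  rw [← Real.rpow_mul (nielsenKernel_pos x t).le, mul_one_div_cancel hc.ne', Real.rpow_one]

lemma memLp_nielsenKernel_rpow {c x : ℝ} (hc : 0 < c) (hx : 0 < x) :
    MemLp (fun t => nielsenKernel x t ^ c) (ENNReal.ofReal (1 / c))
      (volume.restrict (Ioi 0)) := by
  have A : ENNReal.ofReal (1 / c) ≠ 0 := by
    rwa [Ne, ENNReal.ofReal_eq_zero, not_le, one_div_pos]
  have B : ENNReal.ofReal (1 / c) ≠ ⊤ := ENNReal.ofReal_ne_top
  rw [← memLp_norm_rpow_iff _ A B, ENNReal.toReal_ofReal (one_div_nonneg.mpr hc.le),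
    ENNReal.div_self A B, memLp_one_iff_integrable]
  · refine (integrable_nielsenKernel hx).congr (ae_of_all _ fun t => ?_)
    dsimp only
    rw [Real.norm_of_nonneg (Real.rpow_nonneg (nielsenKernel_pos x t).le c),
      nielsenKernel_rpow_rpow hc]
  · exact ((continuous_nielsenKernel x).rpow_const
      fun t => Or.inl (nielsenKernel_pos x t).ne').aestronglyMeasurable

theorem nielsenBeta_log_convex (x y u v : ℝ) (hx : 0 < x) (hy : 0 < y)
    (hu : 0 < u) (hv : 0 < v) (huv : u + v = 1) :
    nielsenBeta (u * x + v * y) ≤ nielsenBeta x ^ u * nielsenBeta y ^ v := by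
  have holder := integral_mul_le_Lp_mul_Lq_of_nonneg (Real.holderConjugate_one_div hu hv huv)
    (ae_of_all _ fun t => Real.rpow_nonneg (nielsenKernel_pos x t).le u)
    (ae_of_all _ fun t => Real.rpow_nonneg (nielsenKernel_pos y t).le v)
    (memLp_nielsenKernel_rpow hu hx) (memLp_nielsenKernel_rpow hv hy)
  simp only [nielsenKernel_rpow_rpow hu, nielsenKernel_rpow_rpow hv,
    ← nielsenKernel_combination huv, one_div_one_div] at holder
  exact holder
end

section
/- Let m ∈ ℕ be odd. Then β^(m) is star-shaped on (0, ∞): for every x > 0 and every α ∈ (0, 1], β^(m)(α x) ≤ α β^(m)(x). -/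
/-!
Differentiating under the integral sign gives, for `x > 0`,
`β^(m)(x) = ∫₀^∞ (-t)^m e^{-x t} / (1 + e^{-t}) dt`. For odd `m` the integrand is nonpositive and
nondecreasing in `x`, hence so is `β^(m)` on `(0, ∞)`, and
`β^(m)(α x) ≤ β^(m)(x) ≤ α β^(m)(x)`, the last step because `β^(m)(x) ≤ 0` and `α ≤ 1`.
-/

open Real MeasureTheory Set

/-- The integrand of the `n`-th derivative of Nielsen's beta function at `x`. -/
noncomputable def betaKernel (n : ℕ) (x t : ℝ) : ℝ :=
  (-t) ^ n * (Real.exp (-x * t) / (1 + Real.exp (-t)))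

lemma continuous_betaKernel (n : ℕ) (x : ℝ) : Continuous (betaKernel n x) := by
  unfold betaKernel
  have h : ∀ t : ℝ, 1 + Real.exp (-t) ≠ 0 := fun t => by positivity
  fun_prop (disch := exact h _)

lemma norm_betaKernel_le (n : ℕ) {c x t : ℝ} (hcx : c ≤ x) (ht : 0 < t) :
    ‖betaKernel n x t‖ ≤ t ^ n * Real.exp (-c * t) := by
  have h1 : Real.exp (-x * t) / (1 + Real.exp (-t)) ≤ Real.exp (-c * t) := by
    refine (div_le_self (by positivity) (by linarith [Real.exp_pos (-t)])).trans ?_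
    apply Real.exp_le_exp.mpr
    nlinarith
  rw [betaKernel, norm_mul, norm_pow, norm_neg, Real.norm_of_nonneg ht.le,
    Real.norm_of_nonneg (by positivity)]
  gcongr

lemma integrableOn_pow_mul_exp (n : ℕ) {c : ℝ} (hc : 0 < c) :
    IntegrableOn (fun t : ℝ => t ^ n * Real.exp (-c * t)) (Ioi 0) := by
  have h := integrableOn_rpow_mul_exp_neg_mul_rpow (s := n) (p := 1) (b := c)
    (by have : (0 : ℝ) ≤ n := n.cast_nonneg
        linarith) one_pos hc
  simpa using h

lemma integrableOn_betaKernel (n : ℕ) {x : ℝ} (hx : 0 < x) :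
    IntegrableOn (betaKernel n x) (Ioi 0) := by
  refine (integrableOn_pow_mul_exp n hx).mono'
    (continuous_betaKernel n x).aestronglyMeasurable ?_
  filter_upwards [ae_restrict_mem measurableSet_Ioi] with t ht
  exact norm_betaKernel_le n le_rfl ht

lemma hasDerivAt_integral_betaKernel (n : ℕ) {x : ℝ} (hx : 0 < x) :
    HasDerivAt (fun y => ∫ t in Ioi (0 : ℝ), betaKernel n y t)
      (∫ t in Ioi (0 : ℝ), betaKernel (n + 1) x t) x := by
  -- On the neighbourhood `(x / 2, ∞)` of `x`, the derivatives are dominated by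
  -- the integrable function `t ^ (n + 1) * exp (-(x / 2) * t)`.
  refine (hasDerivAt_integral_of_dominated_loc_of_deriv_le
    (F' := betaKernel (n + 1)) (s := Ioi (x / 2))
    (bound := fun t => t ^ (n + 1) * Real.exp (-(x / 2) * t))
    (Ioi_mem_nhds (by linarith)) ?_ (integrableOn_betaKernel n hx)
    (continuous_betaKernel (n + 1) x).aestronglyMeasurable ?_
    (integrableOn_pow_mul_exp (n + 1) (by linarith)) ?_).2
  · exact Filter.Eventually.of_forall fun y => (continuous_betaKernel n y).aestronglyMeasurable
  · filter_upwards [ae_restrict_mem measurableSet_Ioi] with t ht y hy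
    exact norm_betaKernel_le (n + 1) (le_of_lt hy) ht
  · refine Filter.Eventually.of_forall fun t y _ => ?_
    have h : HasDerivAt (fun y : ℝ => -y * t) (-t) y := by
      simpa using ((hasDerivAt_id y).neg.mul_const t)
    refine ((h.exp.div_const (1 + Real.exp (-t))).const_mul ((-t) ^ n)).congr_deriv ?_
    rw [betaKernel]
    ring

lemma iteratedDeriv_nielsenBeta_s15 (n : ℕ) {x : ℝ} (hx : 0 < x) :
    iteratedDeriv n nielsenBeta x = ∫ t in Ioi (0 : ℝ), betaKernel n x t := by
  induction n generalizing x with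
  | zero => simp [nielsenBeta, betaKernel]
  | succ n ih =>
    rw [iteratedDeriv_succ]
    have h : iteratedDeriv n nielsenBeta =ᶠ[nhds x]
        fun y => ∫ t in Ioi (0 : ℝ), betaKernel n y t := by
      filter_upwards [Ioi_mem_nhds hx] with y hy using ih hy
    rw [h.deriv_eq, (hasDerivAt_integral_betaKernel n hx).deriv]

theorem iteratedDeriv_nielsenBeta_starShaped (m : ℕ) (hm : Odd m) (x : ℝ) (hx : 0 < x)
    (α : ℝ) (hα0 : 0 < α) (hα1 : α ≤ 1) :
    iteratedDeriv m nielsenBeta (α * x) ≤ α * iteratedDeriv m nielsenBeta x := by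
  have hαx : 0 < α * x := mul_pos hα0 hx
  rw [iteratedDeriv_nielsenBeta_s15 m hx, iteratedDeriv_nielsenBeta_s15 m hαx]
  have hsign : ∀ t ∈ Ioi (0 : ℝ), (-t) ^ m ≤ 0 := fun t ht =>
    hm.pow_nonpos (neg_nonpos.mpr (le_of_lt ht))
  have hnonpos : ∫ t in Ioi (0 : ℝ), betaKernel m x t ≤ 0 :=
    setIntegral_nonpos measurableSet_Ioi fun t ht =>
      mul_nonpos_of_nonpos_of_nonneg (hsign t ht) (by positivity)
  have hmono : ∫ t in Ioi (0 : ℝ), betaKernel m (α * x) t ≤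
      ∫ t in Ioi (0 : ℝ), betaKernel m x t := by
    refine setIntegral_mono_on (integrableOn_betaKernel m hαx) (integrableOn_betaKernel m hx)
      measurableSet_Ioi fun t ht => mul_le_mul_of_nonpos_left ?_ (hsign t ht)
    have ht' : 0 < t := ht
    have hle : α * x ≤ x := mul_le_of_le_one_left hx.le hα1
    gcongr
  nlinarith
end
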